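/- Let d ≥ 2 and n ≥ 2 be integers, and let K be the family of all proper subsets of {0, 1, …, n} (including the empty set), where the vertices form a path 0 – 1 – ⋯ – n. Define the weight v(σ) as the sum over the connected components (maximal runs) of σ of: ω_d(s) for a component of size s containing the vertex 0 or the vertex n, where ω_d(s) = ⌊s/d⌋ if d is odd and ⌊2s/d⌋ if d is even, and ⌊(s + 1)/d⌋ for all other components. There exists an acyclic matching on K, weighted with respect to v, whose critical elements are exactly the following: if d is odd, the single simplex {0, 1, …, n − 1}; if d is even, writing n = k·(d/2) + r with 0 ≤ r < d/2 (subsets written as binary strings ε_0 ε_1 ⋯ ε_n with i ∈ σ iff ε_i = 1): the simplices σ_{q₁,q₂} = 1^{q₁(d/2)+r} 0 1^{d−1} 0 (1^{(d/2)−1} 0)^{k−q₁−q₂−2} 1^{q₂(d/2)} for q₁, q₂ ≥ 0 with q₁ + q₂ ≤ k − 2, with |σ_{q₁,q₂}| = n − k + q₁ + q₂ + 1 and v = q₁ + q₂ + 1, and σ'_{q₁,q₂} = 1^{q₁(d/2)+r} 0 (1^{(d/2)−1} 0)^{k−q₁−q₂} 1^{q₂(d/2)} for q₁, q₂ ≥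 0 with q₁ + q₂ ≤ k, with |σ'_{q₁,q₂}| = n − k + q₁ + q₂ and v = q₁ + q₂. In particular the matching is precise: |σ| − v(σ) = n − k for every critical σ when d is even. -/

import Mathlib

/-- The number of consecutive elements of `σ` ending at `x`
(the position of `x` within its maximal run, `0` if `x ∉ σ`). -/
def leftRun (σ : Finset ℕ) (x : ℕ) : ℕ :=
  (σ.filter fun y => y ≤ x ∧ Finset.Icc y x ⊆ σ).card

/-- The `φ_d`-weight of type `A`: the sum over the maximal runs of consecutive
integers of `σ`, of sizes `n_1, …, n_m`, of `⌊(n_i + 1)/d⌋`. -/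
def vA (d : ℕ) (σ : Finset ℕ) : ℕ :=
  (σ.filter fun x => d ∣ (leftRun σ x + 1)).card

/-- Every maximal run of consecutive integers in `σ` has size at most `r`. -/
def RunsLE (r : ℕ) (σ : Finset ℕ) : Prop :=
  ∀ a : ℕ, ¬ Finset.Icc a (a + r) ⊆ σ

/-- A matching on a family `P` of finite sets: a set of pairs `(τ, σ)` with
`τ ⊆ σ`, `|σ| = |τ| + 1`, every element of `P` occurring in at most one pair. -/
def IsMatching (P : Set (Finset ℕ)) (M : Set (Finset ℕ × Finset ℕ)) : Prop :=
  (∀ p ∈ M, p.1 ∈ P ∧ p.2 ∈ P ∧ p.1 ⊆ p.2 ∧ p.2.card = p.1.card + 1) ∧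
  (∀ p ∈ M, ∀ q ∈ M, p ≠ q → p.1 ≠ q.1 ∧ p.1 ≠ q.2 ∧ p.2 ≠ q.1 ∧ p.2 ≠ q.2)

/-- An element of `P` is critical for `M` if it occurs in no pair of `M`. -/
def IsCritical (P : Set (Finset ℕ)) (M : Set (Finset ℕ × Finset ℕ))
    (σ : Finset ℕ) : Prop :=
  σ ∈ P ∧ ∀ p ∈ M, p.1 ≠ σ ∧ p.2 ≠ σ

/-- Acyclicity of a matching: there is no closed alternating path
`σ_0 ⊳ τ_1 ⊲ σ_1 ⊳ τ_2 ⊲ ⋯ ⊳ τ_m ⊲ σ_m = σ_0` with `m ≥ 2`. -/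
def IsAcyclic (M : Set (Finset ℕ × Finset ℕ)) : Prop :=
  ¬ ∃ (m : ℕ) (σs τs : ℕ → Finset ℕ), 2 ≤ m ∧ σs m = σs 0 ∧
      ∀ i, 1 ≤ i → i ≤ m →
        (τs i, σs i) ∈ M ∧ τs i ⊆ σs (i - 1) ∧
        (σs (i - 1)).card = (τs i).card + 1 ∧ (τs i, σs (i - 1)) ∉ M

/-- A matching is weighted w.r.t. a weight function `v` if matched pairs have
equal weight. -/
def IsWeighted (v : Finset ℕ → ℕ) (M : Set (Finset ℕ × Finset ℕ)) : Prop :=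
  ∀ p ∈ M, v p.1 = v p.2

/-- The only alternating path from the critical cell `σ` down to the critical
cell `τ` is the trivial one (`m = 0`, i.e. the single covering `σ ⊃ τ`). -/
def OnlyTrivialAltPath (M : Set (Finset ℕ × Finset ℕ)) (σ τ : Finset ℕ) : Prop :=
  ∀ (m : ℕ) (σs τs : ℕ → Finset ℕ),
    σs 0 = σ →
    (∀ i, 1 ≤ i → i ≤ m →
      (τs i, σs i) ∈ M ∧ τs i ⊆ σs (i - 1) ∧
      (σs (i - 1)).card = (τs i).card + 1 ∧ (τs i, σs (i - 1)) ∉ M) →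
    τ ⊆ σs m → (σs m).card = τ.card + 1 → m = 0

/-- The number of consecutive elements of `σ` starting at `x`. -/
def rightRun (σ : Finset ℕ) (x : ℕ) : ℕ :=
  (σ.filter fun y => x ≤ y ∧ Finset.Icc x y ⊆ σ).card

open Classical in
/-- The weight of affine type `C̃_n` on subsets of the path `{0, …, n}`:
a run of size `s` containing the vertex `0` or the vertex `n` contributes
`ω_d(s) = ⌊s/d⌋` (`d` odd) or `⌊2s/d⌋` (`d` even); every other run of size `s`
contributes `⌊(s+1)/d⌋`. -/
noncomputable def vTC (d n : ℕ) (σ : Finset ℕ) : ℕ :=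
  (σ.filter fun x =>
    if Finset.Icc 0 x ⊆ σ then
      (if d % 2 = 0 then (d / 2) ∣ leftRun σ x else d ∣ leftRun σ x)
    else if Finset.Icc x n ⊆ σ then
      (if d % 2 = 0 then (d / 2) ∣ rightRun σ x else d ∣ rightRun σ x)
    else d ∣ (leftRun σ x + 1)).card

/-- The subset of `{0, 1, 2, …}` described by a binary string. -/
def strSet (l : List Bool) : Finset ℕ :=
  (Finset.range l.length).filter fun i => l.getD i false = true

/-- The block `1^a`. -/
def one (a : ℕ) : List Bool := List.replicate a true

/-- The block `0^a`. -/
def zero (a : ℕ) : List Bool := List.replicate a false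

/-- `m`-fold repetition of a string. -/
def rep : ℕ → List Bool → List Bool
  | 0, _ => []
  | m + 1, l => l ++ rep m l

/-- The critical cell
`σ_{q₁,q₂} = 1^{q₁(d/2)+r} 0 1^{d-1} 0 (1^{(d/2)-1} 0)^{k-q₁-q₂-2} 1^{q₂(d/2)}`. -/
def sigC (d k r q₁ q₂ : ℕ) : Finset ℕ :=
  strSet (one (q₁ * (d / 2) + r) ++ zero 1 ++ one (d - 1) ++ zero 1 ++
    rep (k - q₁ - q₂ - 2) (one (d / 2 - 1) ++ zero 1) ++ one (q₂ * (d / 2)))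

/-- The critical cell
`σ'_{q₁,q₂} = 1^{q₁(d/2)+r} 0 (1^{(d/2)-1} 0)^{k-q₁-q₂} 1^{q₂(d/2)}`. -/
def sigC' (d k r q₁ q₂ : ℕ) : Finset ℕ :=
  strSet (one (q₁ * (d / 2) + r) ++ zero 1 ++
    rep (k - q₁ - q₂) (one (d / 2 - 1) ++ zero 1) ++ one (q₂ * (d / 2)))

/-!
A matching that toggles one vertex of each set, its pivot, is acyclic as soon as the pivot survives
toggling it and removing vertices below it. So one looks for pivots whose toggling keeps the weight.

For odd `d` the pivot is the last vertex `n`: adding it turns an interior run of length `s`, of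
weight `⌊(s + 1)/d⌋`, into an end run of length `s + 1`, of the same weight.

For `d = 2e` an end run of length `s` weighs `⌊s/e⌋`. Read the binary string of `σ` from the right
as long as it has the form `(1^{e-1} 0)^* 1^*`. If the run to the left of this periodic tail has
fewer than `e - 1` vertices, the vertex between them is a pivot: joining that run to `1^{e-1}` gives
a run of at most `2e - 2` vertices, still of weight `0`, and joining it to the last block `1^{qe}`
leaves the weight `q`. If instead a run `1^{2e-1}` of weight `1` precedes the tail, the vertex to
its left is a pivot, because `⌊(s + 1 + 2e)/2e⌋ = ⌊(s + 1)/2e⌋ + 1`. The search fails only if there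
is no gap to the left of the candidate, and this leaves the two families of critical cells.
-/

section PivotMatching

open Finset

/-- A rule selecting at most one pivot `m` of a set, such that a set keeps its pivot when `m` itself
is toggled and when vertices below `m` are removed. -/
structure IsPivotRule (Piv : Finset ℕ → ℕ → Prop) : Prop where
  unique : ∀ {σ m m'}, Piv σ m → Piv σ m' → m = m'
  of_agree : ∀ {σ σ' m}, Piv σ m → (∀ x, m < x → (x ∈ σ' ↔ x ∈ σ)) →
    (∀ x < m, x ∈ σ' → x ∈ σ) → Piv σ' m

/-- The matching on `P` that toggles the pivot, recorded through the smaller set of each pair. -/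
def pivotMatching (P : Set (Finset ℕ)) (Piv : Finset ℕ → ℕ → Prop) :
    Set (Finset ℕ × Finset ℕ) :=
  {p | p.1 ∈ P ∧ p.2 ∈ P ∧ ∃ m ∉ p.1, Piv p.1 m ∧ p.2 = insert m p.1}

variable {P : Set (Finset ℕ)} {Piv : Finset ℕ → ℕ → Prop} {σ τ : Finset ℕ} {m p p' y : ℕ}

theorem IsPivotRule.erase_of_le (h : IsPivotRule Piv) (hm : Piv σ m) (hy : y ≤ m) :
    Piv (σ.erase y) m :=
  h.of_agree hm (fun x hx => by simp only [mem_erase]; grind) fun _ _ => mem_of_mem_erase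

theorem IsPivotRule.insert_self (h : IsPivotRule Piv) (hm : Piv σ m) : Piv (insert m σ) m :=
  h.of_agree hm (fun x hx => by simp [hx.ne']) fun _ hx hxσ => (mem_insert.1 hxσ).resolve_left hx.ne

theorem IsPivotRule.eq_of_mem_pivotMatching (h : IsPivotRule Piv) {c : Finset ℕ × Finset ℕ}
    (hc : c ∈ pivotMatching P Piv) (hσ : c.1 = σ ∨ c.2 = σ) (hm : Piv σ m) :
    c = (σ.erase m, insert m σ) := by
  obtain ⟨τ, ρ⟩ := c
  obtain ⟨-, -, p, hpτ, hp, rfl : ρ = insert p τ⟩ := hc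
  rcases hσ with rfl | rfl
  · obtain rfl := h.unique hp hm
    rw [erase_eq_of_notMem hpτ]
  · obtain rfl := h.unique (h.insert_self hp) hm
    rw [erase_insert hpτ, insert_idem]

theorem IsPivotRule.eq_of_common_member (h : IsPivotRule Piv) {c c' : Finset ℕ × Finset ℕ}
    (hc : c ∈ pivotMatching P Piv) (hc' : c' ∈ pivotMatching P Piv) (hσ : c.1 = σ ∨ c.2 = σ)
    (hσ' : c'.1 = σ ∨ c'.2 = σ) : c = c' := by
  obtain ⟨m, hm⟩ : ∃ m, Piv σ m := by
    obtain ⟨-, -, m, -, hm, hins⟩ := hc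
    rcases hσ with rfl | rfl
    · exact ⟨m, hm⟩
    · exact ⟨m, hins ▸ h.insert_self hm⟩
  rw [h.eq_of_mem_pivotMatching hc hσ hm, h.eq_of_mem_pivotMatching hc' hσ' hm]

theorem IsPivotRule.isMatching (h : IsPivotRule Piv) : IsMatching P (pivotMatching P Piv) := by
  constructor
  · rintro ⟨τ, σ⟩ ⟨hτ, hσ, m, hmτ, -, rfl : σ = insert m τ⟩
    exact ⟨hτ, hσ, subset_insert _ _, card_insert_of_notMem hmτ⟩
  · intro c hc c' hc' hne
    exact ⟨fun heq => hne (h.eq_of_common_member hc hc' (.inl heq) (.inl rfl)),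
      fun heq => hne (h.eq_of_common_member hc hc' (.inl heq) (.inr rfl)),
      fun heq => hne (h.eq_of_common_member hc hc' (.inr heq) (.inl rfl)),
      fun heq => hne (h.eq_of_common_member hc hc' (.inr heq) (.inr rfl))⟩

theorem IsPivotRule.isCritical_iff (h : IsPivotRule Piv)
    (hP : ∀ σ ∈ P, ∀ m, Piv σ m → σ.erase m ∈ P ∧ insert m σ ∈ P) :
    IsCritical P (pivotMatching P Piv) σ ↔ σ ∈ P ∧ ∀ m, ¬ Piv σ m := by
  refine and_congr_right fun hσ => ⟨fun hcrit m hm => ?_, fun hno c hc => ?_⟩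
  · by_cases hmσ : m ∈ σ
    · exact (hcrit (σ.erase m, σ) ⟨(hP σ hσ m hm).1, hσ, m, notMem_erase m σ,
        h.erase_of_le hm le_rfl, (insert_erase hmσ).symm⟩).2 rfl
    · exact (hcrit (σ, insert m σ) ⟨hσ, (hP σ hσ m hm).2, m, hmσ, hm, rfl⟩).1 rfl
  · obtain ⟨-, -, m, -, hm, hins⟩ := hc
    constructor
    · rintro rfl
      exact hno m hm
    · rintro rfl
      exact hno m (hins ▸ h.insert_self hm)

theorem isWeighted_pivotMatching {v : Finset ℕ → ℕ}
    (hv : ∀ σ ∈ P, ∀ m ∉ σ, Piv σ m → v (insert m σ) = v σ) :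
    IsWeighted v (pivotMatching P Piv) := by
  rintro ⟨τ, σ⟩ ⟨hτ, -, m, hmτ, hm, rfl : σ = insert m τ⟩
  exact (hv τ hτ m hmτ hm).symm

theorem IsPivotRule.lt_of_insert_eq_insert (h : IsPivotRule Piv) (hp : Piv σ p) (hpσ : p ∉ σ)
    (hp' : Piv τ p') (hp'τ : p' ∉ τ) (hyτ : y ∉ τ) (hins : insert y τ = insert p σ) (hne : τ ≠ σ) :
    p < y := by
  have hyp : y ≠ p := by
    rintro rfl
    exact hne (by rw [← erase_insert hyτ, hins, erase_insert hpσ])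
  by_contra! hle
  have hpτ : p ∈ τ := (mem_insert.1 (hins ▸ mem_insert_self p σ)).resolve_left hyp.symm
  have hτ : τ = (insert p σ).erase y := by rw [← hins, erase_insert hyτ]
  exact hp'τ (h.unique (hτ ▸ h.erase_of_le (h.insert_self hp) hle) hp' ▸ hpτ)

theorem eq_of_antitone_cycle {α : Type*} [PartialOrder α] {s : ℕ → α} {N i : ℕ}
    (hs : ∀ j < N, s (j + 1) ≤ s j) (hcycle : s N = s 0) (hi : i < N) : s (i + 1) = s i := by
  have hanti : AntitoneOn s (Set.Iic N) :=
    antitoneOn_of_add_one_le Set.ordConnected_Iic fun j _ _ hj => hs j hj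
  refine (hs i hi).antisymm ?_
  calc s i ≤ s 0 := hanti (Nat.zero_le N) hi.le (Nat.zero_le i)
    _ = s N := hcycle.symm
    _ ≤ s (i + 1) := hanti (Set.mem_Iic.2 hi) Set.self_mem_Iic hi

/-- Along a closed alternating path, consider the largest pivot `p j`. The vertices above `p j` are
never inserted, so none is ever removed; yet the step after the insertion of `p j` removes one. -/
theorem IsPivotRule.isAcyclic (h : IsPivotRule Piv) : IsAcyclic (pivotMatching P Piv) := by
  rintro ⟨N, σs, τs, hN, hcycle, hpath⟩
  replace hpath := fun i (hi : i < N) => hpath (i + 1) (by omega) hi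
  simp only [Nat.add_sub_cancel] at hpath
  have hpivot : ∀ i < N, ∃ p ∉ τs (i + 1), Piv (τs (i + 1)) p ∧
      σs (i + 1) = insert p (τs (i + 1)) := fun i hi => (hpath i hi).1.2.2
  choose! p hpτ hp hσ using hpivot
  obtain ⟨j, hj, hmax⟩ := exists_max_image (range N) p ⟨0, mem_range.2 (by omega)⟩
  simp only [mem_range] at hj hmax
  have hdecr : ∀ i < N, {x ∈ σs (i + 1) | p j < x} ⊆ {x ∈ σs i | p j < x} := fun i hi x => by
    have := hmax i hi
    have := @(hpath i hi).2.1 x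
    simp only [mem_filter, hσ i hi, mem_insert]
    grind
  obtain ⟨i, hi, hij⟩ : ∃ i < N, σs i = σs (j + 1) := by
    rcases (show j + 1 ≤ N from hj).eq_or_lt with rfl | hjN
    · exact ⟨0, by omega, hcycle.symm⟩
    · exact ⟨j + 1, hjN, rfl⟩
  obtain ⟨-, hτσ, hcard, hnot⟩ := hpath i hi
  obtain ⟨y, hyτ, hins⟩ := exists_eq_insert_iff.2 ⟨hτσ, hcard.symm⟩
  have hτ : τs (i + 1) ≠ τs (j + 1) := fun heq => hnot (by rw [heq, hij]; exact (hpath j hj).1)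
  have hlt : p j < y := h.lt_of_insert_eq_insert (hp j hj) (hpτ j hj) (hp i hi) (hpτ i hi) hyτ
    (by rw [hins, hij, hσ j hj]) hτ
  have hy : y ∈ {x ∈ σs (i + 1) | p j < x} := by
    rw [eq_of_antitone_cycle (s := fun i => {x ∈ σs i | p j < x}) hdecr (by rw [hcycle]) hi]
    exact mem_filter.2 ⟨hins ▸ mem_insert_self _ _, hlt⟩
  rw [mem_filter, hσ i hi, mem_insert] at hy
  have := hmax i hi
  rcases hy.1 with rfl | hy
  · omega
  · exact hyτ hy

end PivotMatching

section ProperSubsets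

open Finset

/-- The boundary of the simplex on `{0, …, n}`: the family the matchings live on. -/
def properSubsets (n : ℕ) : Set (Finset ℕ) := {σ | σ ⊆ range (n + 1) ∧ σ ≠ range (n + 1)}

theorem mem_properSubsets_of_notMem {n z : ℕ} {σ : Finset ℕ} (hσ : σ ⊆ range (n + 1)) (hzn : z ≤ n)
    (hz : z ∉ σ) : σ ∈ properSubsets n :=
  ⟨hσ, fun heq => hz (heq ▸ mem_range.2 (Nat.lt_succ_of_le hzn))⟩

theorem toggle_mem_properSubsets {n z m : ℕ} {σ : Finset ℕ} (hσ : σ ∈ properSubsets n) (hm : m ≤ n)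
    (hzm : z < m) (hz : z ∉ σ) :
    σ.erase m ∈ properSubsets n ∧ insert m σ ∈ properSubsets n :=
  ⟨mem_properSubsets_of_notMem ((erase_subset m σ).trans hσ.1) hm (notMem_erase m σ),
    mem_properSubsets_of_notMem (insert_subset (mem_range.2 (Nat.lt_succ_of_le hm)) hσ.1)
      (hzm.le.trans hm) (by simp [hz, hzm.ne])⟩

end ProperSubsets

section Weight

open Finset

/-- The period with which the runs containing `0` or `n` contribute:
`ω_d(s) = ⌊s / endPeriod d⌋`. -/
def endPeriod (d : ℕ) : ℕ := if d % 2 = 0 then d / 2 else d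

theorem endPeriod_two_mul (e : ℕ) : endPeriod (2 * e) = e := by
  simp [endPeriod]

/-- The vertex `x` of `σ` is one of those counted by `vTC d n σ`. -/
def Contributes (d n : ℕ) (σ : Finset ℕ) (x : ℕ) : Prop :=
  x ∈ σ ∧ if Icc 0 x ⊆ σ then endPeriod d ∣ leftRun σ x
    else if Icc x n ⊆ σ then endPeriod d ∣ rightRun σ x
    else d ∣ leftRun σ x + 1

open Classical in
/-- The part of `vTC d n σ` contributed by the vertices in `[a, b)`. -/
noncomputable def partWeight (d n : ℕ) (σ : Finset ℕ) (a b : ℕ) : ℕ :=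
  #{x ∈ Ico a b | Contributes d n σ x}

/-- The vertices strictly between `z` and `b` form a maximal run of `σ`, empty if `b = z + 1`. -/
structure ConsecutiveGaps (σ : Finset ℕ) (z b : ℕ) : Prop where
  lt : z < b
  left_notMem : z ∉ σ
  right_notMem : b ∉ σ
  mem : ∀ x, z < x → x < b → x ∈ σ

/-- The contribution to `vTC d n` of the run strictly between the gaps `z` and `b`. The gap
`b = n + 1` beyond the last vertex signals an end run. -/
def gapWeight (d n z b : ℕ) : ℕ :=
  if b = n + 1 then (n - z) / endPeriod d else (b - z) / d

variable {d n a b c m x z : ℕ} {σ σ' : Finset ℕ}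

theorem gapWeight_of_le (h : b ≤ n) : gapWeight d n z b = (b - z) / d :=
  if_neg (by omega)

theorem gapWeight_end : gapWeight d n z (n + 1) = (n - z) / endPeriod d :=
  if_pos rfl

theorem vTC_eq_partWeight (hσ : σ ⊆ range (n + 1)) : vTC d n σ = partWeight d n σ 0 (n + 1) := by
  classical
  rw [vTC, partWeight]
  congr 1
  ext x
  have hx : x ∈ σ → x ≤ n := fun hx => Nat.lt_succ_iff.1 (mem_range.1 (hσ hx))
  rw [mem_filter, mem_filter, mem_Ico, Contributes, endPeriod]
  split_ifs <;> simp +contextual [hx]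

theorem partWeight_eq_card {p : ℕ → Prop} [DecidablePred p]
    (h : ∀ x ∈ Ico a b, (Contributes d n σ x ↔ p x)) :
    partWeight d n σ a b = #{x ∈ Ico a b | p x} := by
  classical
  rw [partWeight, filter_congr h]

theorem partWeight_split (haz : a ≤ z) (hzb : z ≤ b) (hz : z ∉ σ) :
    partWeight d n σ a b = partWeight d n σ a z + partWeight d n σ (z + 1) b := by
  classical
  rw [partWeight, partWeight, partWeight, ← card_union_of_disjoint]
  · congr 1
    ext x
    have : Contributes d n σ x → x ≠ z := fun h hx => hz (hx ▸ h.1)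
    simp only [mem_union, mem_filter, mem_Ico]
    grind
  · exact disjoint_left.2 fun x hx hx' => by
      simp only [mem_filter, mem_Ico] at hx hx'
      omega

theorem leftRun_congr (h : ∀ w ≤ x, (Icc w x ⊆ σ ↔ Icc w x ⊆ σ')) :
    leftRun σ x = leftRun σ' x := by
  have mem_of_subset : ∀ {ρ : Finset ℕ} {w}, w ≤ x → Icc w x ⊆ ρ → w ∈ ρ :=
    fun hw hρ => hρ (left_mem_Icc.2 hw)
  rw [leftRun, leftRun]
  congr 1
  grind

theorem rightRun_congr (h : ∀ y, x ≤ y → (Icc x y ⊆ σ ↔ Icc x y ⊆ σ')) :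
    rightRun σ x = rightRun σ' x := by
  have mem_of_subset : ∀ {ρ : Finset ℕ} {y}, x ≤ y → Icc x y ⊆ ρ → y ∈ ρ :=
    fun hy hρ => hρ (right_mem_Icc.2 hy)
  rw [rightRun, rightRun]
  congr 1
  grind

theorem contributes_congr (hx : x ≤ n)
    (h : ∀ w y, w ≤ x → x ≤ y → (Icc w y ⊆ σ ↔ Icc w y ⊆ σ')) :
    Contributes d n σ x ↔ Contributes d n σ' x := by
  have hmem : x ∈ σ ↔ x ∈ σ' := by simpa using h x x le_rfl le_rfl
  simp only [Contributes, hmem, h 0 x (Nat.zero_le x) le_rfl, h x n le_rfl hx,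
    leftRun_congr fun w hw => h w x hw le_rfl, rightRun_congr fun y hy => h x y le_rfl hy]

theorem partWeight_congr (hb : b ≤ n + 1)
    (h : ∀ x ∈ Ico a b, ∀ w y, w ≤ x → x ≤ y → (Icc w y ⊆ σ ↔ Icc w y ⊆ σ')) :
    partWeight d n σ a b = partWeight d n σ' a b := by
  classical
  exact partWeight_eq_card fun x hx =>
    contributes_congr (by have := (mem_Ico.1 hx).2; omega) (h x hx)

theorem partWeight_congr_below (hzn : z ≤ n + 1) (hz : z ∉ σ) (hz' : z ∉ σ')
    (h : ∀ x < z, x ∈ σ ↔ x ∈ σ') : partWeight d n σ 0 z = partWeight d n σ' 0 z := by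
  refine partWeight_congr hzn fun x hx w y hwx hxy => ?_
  have hxz := (mem_Ico.1 hx).2
  rcases lt_or_ge y z with hy | hy
  · exact forall₂_congr fun u hu => h u ((mem_Icc.1 hu).2.trans_lt hy)
  · have hzwy : z ∈ Icc w y := mem_Icc.2 ⟨by omega, hy⟩
    exact iff_of_false (fun hs => hz (hs hzwy)) fun hs => hz' (hs hzwy)

theorem partWeight_congr_above (hb : b ≤ n + 1) (hz : z ∉ σ) (hz' : z ∉ σ')
    (h : ∀ x, z < x → (x ∈ σ ↔ x ∈ σ')) :
    partWeight d n σ (z + 1) b = partWeight d n σ' (z + 1) b := by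
  refine partWeight_congr hb fun x hx w y hwx hxy => ?_
  have hzx := (mem_Ico.1 hx).1
  rcases lt_or_ge z w with hw | hw
  · exact forall₂_congr fun u hu => h u (hw.trans_le (mem_Icc.1 hu).1)
  · have hzwy : z ∈ Icc w y := mem_Icc.2 ⟨hw, by omega⟩
    exact iff_of_false (fun hs => hz (hs hzwy)) fun hs => hz' (hs hzwy)

theorem leftRun_of_initial (h : ∀ y ≤ x, y ∈ σ) : leftRun σ x = x + 1 := by
  have : {y ∈ σ | y ≤ x ∧ Icc y x ⊆ σ} = range (x + 1) := by
    ext y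
    simp only [mem_filter, subset_iff, mem_Icc, mem_range]
    grind
  rw [leftRun, this, card_range]

theorem ConsecutiveGaps.leftRun_eq (h : ConsecutiveGaps σ z b) (hzx : z ≤ x) (hxb : x < b) :
    leftRun σ x = x - z := by
  have hgap := h.left_notMem
  have hrun := h.mem
  have : {y ∈ σ | y ≤ x ∧ Icc y x ⊆ σ} = Ioc z x := by
    ext y
    simp only [mem_filter, subset_iff, mem_Icc, mem_Ioc]
    grind
  rw [leftRun, this, Nat.card_Ioc]

theorem ConsecutiveGaps.rightRun_eq (h : ConsecutiveGaps σ z b) (hzx : z < x) (hxb : x ≤ b) :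
    rightRun σ x = b - x := by
  have hgap := h.right_notMem
  have hrun := h.mem
  have : {y ∈ σ | x ≤ y ∧ Icc x y ⊆ σ} = Ico x b := by
    ext y
    simp only [mem_filter, subset_iff, mem_Icc, mem_Ico]
    grind
  rw [rightRun, this, Nat.card_Ico]

theorem card_filter_dvd_sub_add_one (e a b : ℕ) :
    #{x ∈ Ico a b | e ∣ x - a + 1} = (b - a) / e := by
  rw [← Nat.card_multiples, card_filter, sum_Ico_eq_sum_range, card_filter]
  simp only [Nat.add_sub_cancel_left]

theorem card_filter_dvd_sub (e a b : ℕ) : #{x ∈ Ico a b | e ∣ b - x} = (b - a) / e := by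
  rw [← Nat.card_multiples, card_filter, sum_Ico_eq_sum_range, ← sum_range_reflect, card_filter]
  refine sum_congr rfl fun x hx => ?_
  rw [show b - (a + (b - a - 1 - x)) = x + 1 by have := mem_range.1 hx; omega]

theorem partWeight_initial_run (h : ∀ x < b, x ∈ σ) :
    partWeight d n σ 0 b = b / endPeriod d := by
  refine (partWeight_eq_card fun x hx => ?_).trans (card_filter_dvd_sub_add_one (endPeriod d) 0 b)
  have hxb := (mem_Ico.1 hx).2
  have hinitial : Icc 0 x ⊆ σ := fun y hy => h y ((mem_Icc.1 hy).2.trans_lt hxb)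
  simp [Contributes, hinitial, h x hxb, leftRun_of_initial fun y hy => h y (hy.trans_lt hxb)]

theorem ConsecutiveGaps.contributes_iff (h : ConsecutiveGaps σ z b) (hbn : b ≤ n + 1) (hzx : z < x)
    (hxb : x < b) :
    Contributes d n σ x ↔ if b = n + 1 then endPeriod d ∣ b - x else d ∣ x - z + 1 := by
  have hinitial : ¬ Icc 0 x ⊆ σ := fun hs => h.left_notMem (hs (mem_Icc.2 ⟨Nat.zero_le z, hzx.le⟩))
  have hfinal : Icc x n ⊆ σ ↔ b = n + 1 := by
    refine ⟨fun hs => ?_, fun hb y hy => ?_⟩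
    · by_contra hne
      exact h.right_notMem (hs (mem_Icc.2 ⟨hxb.le, by omega⟩))
    · rw [mem_Icc] at hy
      exact h.mem y (by omega) (by omega)
  simp only [Contributes, h.mem x hzx hxb, hinitial, hfinal, h.leftRun_eq hzx.le hxb,
    h.rightRun_eq hzx hxb.le, true_and, if_false]

/-- For an interior run one counts over `[z, b)`, where `z` is not a solution because `d ∤ 1`. -/
theorem ConsecutiveGaps.partWeight_eq (h : ConsecutiveGaps σ z b) (hd : 2 ≤ d) (hbn : b ≤ n + 1) :
    partWeight d n σ (z + 1) b = gapWeight d n z b := by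
  rw [gapWeight, partWeight_eq_card fun x hx =>
    h.contributes_iff hbn (mem_Ico.1 hx).1 (mem_Ico.1 hx).2]
  split_ifs with hb
  · rw [card_filter_dvd_sub, hb, Nat.add_sub_add_right]
  · have hz : ¬ d ∣ z - z + 1 := fun hdvd => by
      have := Nat.le_of_dvd (by omega) hdvd
      omega
    rw [← card_filter_dvd_sub_add_one, ← Ioo_insert_left h.lt, filter_insert, if_neg hz]
    rfl

theorem ConsecutiveGaps.vTC_eq (h : ConsecutiveGaps σ z b) (hd : 2 ≤ d) (hσ : σ ⊆ range (n + 1))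
    (hbn : b ≤ n + 1) :
    vTC d n σ = partWeight d n σ 0 z + gapWeight d n z b + partWeight d n σ (b + 1) (n + 1) := by
  have hzb := h.lt
  rw [vTC_eq_partWeight hσ, partWeight_split (Nat.zero_le z) (by omega) h.left_notMem,
    partWeight_split hzb hbn h.right_notMem, h.partWeight_eq hd hbn, add_assoc]

theorem ConsecutiveGaps.insert_gap (h₁ : ConsecutiveGaps σ z m) (h₂ : ConsecutiveGaps σ m b) :
    ConsecutiveGaps (insert m σ) z b where
  lt := h₁.lt.trans h₂.lt
  left_notMem := by simp [h₁.left_notMem, h₁.lt.ne]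
  right_notMem := by simp [h₂.right_notMem, h₂.lt.ne']
  mem x hzx hxb := by
    rcases lt_trichotomy x m with hx | rfl | hx
    · exact mem_insert_of_mem (h₁.mem x hzx hx)
    · exact mem_insert_self _ _
    · exact mem_insert_of_mem (h₂.mem x hx hxb)

theorem ConsecutiveGaps.vTC_insert (h₁ : ConsecutiveGaps σ z m) (h₂ : ConsecutiveGaps σ m b)
    (hd : 2 ≤ d) (hσ : σ ⊆ range (n + 1)) (hbn : b ≤ n + 1)
    (hweight : gapWeight d n z m + gapWeight d n m b = gapWeight d n z b) :
    vTC d n (insert m σ) = vTC d n σ := by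
  have hzm := h₁.lt
  have hmb := h₂.lt
  have h := h₁.insert_gap h₂
  have hσ' : insert m σ ⊆ range (n + 1) := insert_subset (mem_range.2 (by omega)) hσ
  have hagree : ∀ x, x ≠ m → (x ∈ insert m σ ↔ x ∈ σ) := fun x hx => by simp [hx]
  rw [h.vTC_eq hd hσ' hbn, h₁.vTC_eq hd hσ (by omega),
    partWeight_split hmb hbn h₂.right_notMem, h₂.partWeight_eq hd hbn, ← hweight,
    partWeight_congr_below (by omega) h.left_notMem h₁.left_notMem fun x hx =>
      hagree x (by omega),
    partWeight_congr_above le_rfl h.right_notMem h₂.right_notMem fun x hx =>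
      hagree x (by omega)]
  ring

theorem exists_consecutiveGaps (hzm : z < m) (hz : z ∉ σ) (hm : m ∉ σ) :
    ∃ w, z ≤ w ∧ ConsecutiveGaps σ w m := by
  obtain ⟨w, hw, hmax⟩ := exists_max_image {y ∈ range m | y ∉ σ} id ⟨z, by simp [hzm, hz]⟩
  simp only [mem_filter, mem_range, id_eq, and_imp] at hw hmax
  exact ⟨w, hmax z hzm hz, hw.1, hw.2, hm, fun x hwx hxm => by
    by_contra hx
    exact absurd (hmax x hxm hx) (by omega)⟩

end Weight

section Odd

open Finset

/-- The pivot rule for odd `d`: toggle the last vertex, unless it is the only one missing. -/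
def LastPivot (n : ℕ) (σ : Finset ℕ) (m : ℕ) : Prop := m = n ∧ ∃ z < m, z ∉ σ

variable {d n : ℕ} {σ : Finset ℕ}

theorem isPivotRule_lastPivot (n : ℕ) : IsPivotRule (LastPivot n) where
  unique h h' := h.1.trans h'.1.symm
  of_agree := by
    rintro σ σ' m ⟨hm, z, hzm, hz⟩ - hbelow
    exact ⟨hm, z, hzm, fun hz' => hz (hbelow z hzm hz')⟩

theorem isWeighted_lastPivot (hd : 2 ≤ d) (hodd : d % 2 = 1) :
    IsWeighted (vTC d n) (pivotMatching (properSubsets n) (LastPivot n)) := by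
  refine isWeighted_pivotMatching fun σ hσ m hmσ ⟨hmn, z, hzm, hz⟩ => ?_
  subst hmn
  obtain ⟨w, -, hw⟩ := exists_consecutiveGaps hzm hz hmσ
  have hend : ConsecutiveGaps σ m (m + 1) :=
    ⟨Nat.lt_succ_self m, hmσ, fun h => by simpa using hσ.1 h, fun x _ _ => by omega⟩
  refine hw.vTC_insert hend hd hσ.1 le_rfl ?_
  simp [gapWeight_of_le, gapWeight_end, endPeriod, hodd]

theorem eq_range_iff_forall_lt_mem (hσ : σ ∈ properSubsets n) :
    σ = range n ↔ ∀ x < n, x ∈ σ := by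
  refine ⟨fun h x hx => h ▸ mem_range.2 hx, fun h => ?_⟩
  have hn : n ∉ σ := fun hn => hσ.2 <| hσ.1.antisymm fun x hx => by
    rcases (Nat.lt_succ_iff.1 (mem_range.1 hx)).eq_or_lt with rfl | hx
    exacts [hn, h x hx]
  refine subset_antisymm (fun x hx => mem_range.2 ?_) fun x hx => h x (mem_range.1 hx)
  exact (Nat.lt_succ_iff.1 (mem_range.1 (hσ.1 hx))).lt_of_ne fun hxn => hn (hxn ▸ hx)

theorem isCritical_lastPivot_iff :
    IsCritical (properSubsets n) (pivotMatching (properSubsets n) (LastPivot n)) σ ↔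
      σ = range n := by
  rw [(isPivotRule_lastPivot n).isCritical_iff fun σ hσ m ⟨hmn, z, hzm, hz⟩ =>
    toggle_mem_properSubsets hσ hmn.le hzm hz]
  constructor
  · rintro ⟨hσ, hno⟩
    refine (eq_range_iff_forall_lt_mem hσ).2 fun x hx => ?_
    by_contra hxσ
    exact hno n ⟨rfl, x, hx, hxσ⟩
  · rintro rfl
    exact ⟨mem_properSubsets_of_notMem (range_mono (Nat.le_succ n)) le_rfl notMem_range_self,
      fun m ⟨hmn, z, hzm, hz⟩ => hz (mem_range.2 (hzm.trans_eq hmn))⟩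

end Odd

section Even

open Finset

/-- After position `t`, the binary string of `σ` reads `(1^{e-1} 0)^* 1^*`, where `c` is the
position of the last `0`, or `c = t` if there is no `0` after `t`; the last block `1^*` has a
multiple of `e` letters. Whether `t ∈ σ` is left open. -/
structure PeriodicTail (e n : ℕ) (σ : Finset ℕ) (t c : ℕ) : Prop where
  start_le : t ≤ c
  last_le : c ≤ n
  start_modEq : t ≡ n [MOD e]
  last_modEq : c ≡ n [MOD e]
  mem_iff : ∀ x, t < x → (x ∈ σ ↔ x ≤ n ∧ (c < x ∨ ¬ x ≡ n [MOD e]))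

/-- After position `m`, the binary string of `σ` reads `1^{2e-1} 0 (1^{e-1} 0)^* 1^*`, with last `0`
at position `c`. -/
structure LongRun (e n : ℕ) (σ : Finset ℕ) (m c : ℕ) : Prop
    extends PeriodicTail e n σ (m + 2 * e) c where
  end_notMem : m + 2 * e ∉ σ
  run_mem : ∀ x, m < x → x < m + 2 * e → x ∈ σ

/-- Toggling `m` merges or separates a run shorter than `e` and the first run of a periodic tail. -/
def ShortPivot (e n : ℕ) (σ : Finset ℕ) (m : ℕ) : Prop :=
  (∃ c, PeriodicTail e n σ m c) ∧ ∃ z < m, m < z + e ∧ z ∉ σ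

/-- Toggling `m` merges or separates a run not containing `0` and a run of length `2e - 1`. -/
def LongPivot (e n : ℕ) (σ : Finset ℕ) (m : ℕ) : Prop :=
  (∃ c, LongRun e n σ m c) ∧ ∃ z < m, z ∉ σ

/-- The pivot rule for even `d = 2e`. -/
def EvenPivot (e n : ℕ) (σ : Finset ℕ) (m : ℕ) : Prop :=
  ShortPivot e n σ m ∨ LongPivot e n σ m

/-- The critical cells `1^t 0 (1^{e-1} 0)^* 1^*` with last `0` at position `c`. -/
structure ShortCell (e n : ℕ) (σ : Finset ℕ) (t c : ℕ) : Prop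
    extends PeriodicTail e n σ t c where
  start_notMem : t ∉ σ
  initial_mem : ∀ x < t, x ∈ σ

/-- The critical cells `1^m 0 1^{2e-1} 0 (1^{e-1} 0)^* 1^*` with last `0` at position `c`. -/
structure LongCell (e n : ℕ) (σ : Finset ℕ) (m c : ℕ) : Prop extends LongRun e n σ m c where
  start_notMem : m ∉ σ
  initial_mem : ∀ x < m, x ∈ σ

variable {e n t t' c c' m m' x : ℕ} {σ σ' : Finset ℕ}

namespace PeriodicTail

theorem notMem (h : PeriodicTail e n σ t c) (htx : t < x) (hxc : x ≤ c) (hx : x ≡ n [MOD e]) :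
    x ∉ σ := fun hxσ =>
  ((h.mem_iff x htx).1 hxσ).2.elim hxc.not_gt fun hx' => hx' hx

theorem mem_of_last_lt (h : PeriodicTail e n σ t c) (hcx : c < x) (hxn : x ≤ n) : x ∈ σ :=
  (h.mem_iff x (h.start_le.trans_lt hcx)).2 ⟨hxn, .inl hcx⟩

theorem mem_of_lt_add (h : PeriodicTail e n σ t c) (htx : t < x) (hxe : x < t + e) (hxn : x ≤ n) :
    x ∈ σ :=
  (h.mem_iff x htx).2 ⟨hxn, .inr fun hx =>
    hxe.not_ge ((h.start_modEq.trans hx.symm).add_le_of_lt htx)⟩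

theorem start_add_le (h : PeriodicTail e n σ t c) (htc : t < c) : t + e ≤ c :=
  (h.start_modEq.trans h.last_modEq.symm).add_le_of_lt htc

theorem of_agree (h : PeriodicTail e n σ t c) (hσ : ∀ x, t < x → (x ∈ σ' ↔ x ∈ σ)) :
    PeriodicTail e n σ' t c :=
  { h with mem_iff := fun x hx => (hσ x hx).trans (h.mem_iff x hx) }

theorem add_period (h : PeriodicTail e n σ t c) (htc : t < c) : PeriodicTail e n σ (t + e) c where
  start_le := h.start_add_le htc
  last_le := h.last_le
  start_modEq := Nat.add_modEq_right.trans h.start_modEq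
  last_modEq := h.last_modEq
  mem_iff x hx := h.mem_iff x (by omega)

theorem add_period_notMem (h : PeriodicTail e n σ t c) (he : 0 < e) (htc : t < c) : t + e ∉ σ :=
  h.notMem (by omega) (h.start_add_le htc) (Nat.add_modEq_right.trans h.start_modEq)

theorem subset_range (h : PeriodicTail e n σ t c) : σ ⊆ range (n + 1) := fun x hx => by
  have htn := h.start_le.trans h.last_le
  rcases le_or_gt x t with hxt | htx
  · exact mem_range.2 (by omega)
  · exact mem_range.2 (Nat.lt_succ_of_le ((h.mem_iff x htx).1 hx).1)

theorem of_last (hσ : σ ⊆ range (n + 1)) : PeriodicTail e n σ n n where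
  start_le := le_rfl
  last_le := le_rfl
  start_modEq := rfl
  last_modEq := rfl
  mem_iff x hx := iff_of_false (fun hxσ => by have := mem_range.1 (hσ hxσ); omega) (by omega)

theorem exists_sub_period (h : PeriodicTail e n σ t c) (he : 0 < e) (het : e ≤ t)
    (hrun : ∀ x < t, t < x + e → x ∈ σ) (hlast : t ∈ σ → t = c) :
    ∃ c', PeriodicTail e n σ (t - e) c' := by
  have hmod : t - e ≡ n [MOD e] := (Nat.sub_modulus_modEq_iff het).2 h.start_modEq
  have hrun_mod : ∀ x < t, t < x + e → ¬ x ≡ n [MOD e] := fun x hxt hx hxn =>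
    hx.not_ge ((hxn.trans h.start_modEq.symm).add_le_of_lt hxt)
  have htc := h.start_le
  have hcn := h.last_le
  by_cases htσ : t ∈ σ
  · obtain rfl := hlast htσ
    refine ⟨t - e, le_rfl, by omega, hmod, hmod, fun x hx => ?_⟩
    rcases lt_trichotomy x t with hxt | rfl | hxt
    · exact iff_of_true (hrun x hxt (by omega)) ⟨by omega, .inl hx⟩
    · exact iff_of_true htσ ⟨hcn, .inl hx⟩
    · simp only [h.mem_iff x hxt, hxt, hx, true_or]
  · refine ⟨c, by omega, hcn, hmod, h.last_modEq, fun x hx => ?_⟩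
    rcases lt_trichotomy x t with hxt | rfl | hxt
    · exact iff_of_true (hrun x hxt (by omega)) ⟨by omega, .inr (hrun_mod x hxt (by omega))⟩
    · exact iff_of_false htσ (by simp [h.start_modEq, htc])
    · exact h.mem_iff x hxt

end PeriodicTail

theorem ShortPivot.le_of_periodicTail (h : ShortPivot e n σ m) (ht : PeriodicTail e n σ t c) :
    m ≤ t := by
  obtain ⟨⟨c', hm⟩, z, hzm, hmz, hz⟩ := h
  by_contra! htm
  have hte := (ht.start_modEq.trans hm.start_modEq.symm).add_le_of_lt htm
  have hzn : z ≤ n := hzm.le.trans (hm.start_le.trans hm.last_le)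
  have hz_mod : z ≡ m [MOD e] := by
    by_contra hne
    exact hz ((ht.mem_iff z (by omega)).2 ⟨hzn, .inr fun h => hne (h.trans hm.start_modEq.symm)⟩)
  exact hmz.not_ge (hz_mod.add_le_of_lt hzm)

theorem LongRun.start_modEq_last (h : LongRun e n σ m c) : m ≡ n [MOD e] :=
  Nat.add_mul_modulus_modEq_iff.1 h.start_modEq

/-- The vertex `m + e ∈ σ` and the gap `m + 2e` are congruent to `n`, so no periodic tail contains
both of them. -/
theorem LongRun.add_le_of_periodicTail (h : LongRun e n σ m c) (he : 0 < e)
    (ht : PeriodicTail e n σ t c') : m + e ≤ t := by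
  by_contra! hlt
  have htm : t ≤ m := by
    by_contra! hmt
    exact hlt.not_ge ((h.start_modEq_last.trans ht.start_modEq.symm).add_le_of_lt hmt)
  have hmem : m + e ∈ σ := h.run_mem _ (by omega) (by omega)
  have hcm : c' < m + e := by
    by_contra! hle
    exact ht.notMem (by omega) hle (Nat.add_modEq_right.trans h.start_modEq_last) hmem
  exact h.end_notMem (ht.mem_of_last_lt (by omega) (h.start_le.trans h.last_le))

theorem LongRun.not_shortPivot (h : LongRun e n σ m c) (he : 0 < e) : ¬ ShortPivot e n σ m' := by
  intro h'
  have hle := h'.le_of_periodicTail h.toPeriodicTail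
  obtain ⟨⟨c', hm'⟩, z, hzm, hmz, hz⟩ := h'
  have hge := h.add_le_of_periodicTail he hm'
  exact hz (h.run_mem z (by omega) (by omega))

theorem LongRun.eq (h : LongRun e n σ m c) (h' : LongRun e n σ m' c') (he : 0 < e) : m = m' := by
  wlog hlt : m < m' generalizing m m' c c'
  · exact (not_lt.1 hlt).eq_or_lt.elim Eq.symm fun hlt' => (this h' h hlt').symm
  have hge := (h.start_modEq_last.trans h'.start_modEq_last.symm).add_le_of_lt hlt
  have hle := h'.add_le_of_periodicTail he h.toPeriodicTail
  exact absurd (h'.run_mem (m + 2 * e) (by omega) (by omega)) h.end_notMem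

theorem isPivotRule_evenPivot (he : 0 < e) (n : ℕ) : IsPivotRule (EvenPivot e n) where
  unique := by
    rintro σ m m' (h | ⟨⟨c, h⟩, -⟩) (h' | ⟨⟨c', h'⟩, -⟩)
    · exact (h.le_of_periodicTail h'.1.choose_spec).antisymm
        (h'.le_of_periodicTail h.1.choose_spec)
    · exact absurd h (h'.not_shortPivot he)
    · exact absurd h' (h.not_shortPivot he)
    · exact h.eq h' he
  of_agree := by
    rintro σ σ' m (⟨⟨c, h⟩, z, hzm, hmz, hz⟩ | ⟨⟨c, h⟩, z, hzm, hz⟩) habove hbelow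
    · exact .inl ⟨⟨c, h.of_agree habove⟩, z, hzm, hmz, fun hz' => hz (hbelow z hzm hz')⟩
    · refine .inr ⟨⟨c, h.toPeriodicTail.of_agree fun x hx => habove x (by omega), ?_, ?_⟩,
        z, hzm, fun hz' => hz (hbelow z hzm hz')⟩
      · exact fun hend => h.end_notMem ((habove _ (by omega)).1 hend)
      · exact fun x hmx hx => (habove x hmx).2 (h.run_mem x hmx hx)

theorem PeriodicTail.consecutiveGaps_period (h : PeriodicTail e n σ t c) (he : 0 < e) (ht : t ∉ σ)
    (htc : t < c) : ConsecutiveGaps σ t (t + e) where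
  lt := by omega
  left_notMem := ht
  right_notMem := h.add_period_notMem he htc
  mem x htx hxe := h.mem_of_lt_add htx hxe <| by
    have := h.start_add_le htc
    have := h.last_le
    omega

theorem PeriodicTail.consecutiveGaps_last (h : PeriodicTail e n σ t c) (hc : c ∉ σ) :
    ConsecutiveGaps σ c (n + 1) where
  lt := Nat.lt_succ_of_le h.last_le
  left_notMem := hc
  right_notMem hn := notMem_range_self (h.subset_range hn)
  mem _ hcx hxn := h.mem_of_last_lt hcx (Nat.lt_succ_iff.1 hxn)

theorem isWeighted_evenPivot (he : 0 < e) :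
    IsWeighted (vTC (2 * e) n) (pivotMatching (properSubsets n) (EvenPivot e n)) := by
  refine isWeighted_pivotMatching fun σ hσ m hmσ hm => ?_
  have h2e : 0 < 2 * e := by omega
  rcases hm with ⟨⟨c, h⟩, z, hzm, hmz, hz⟩ | ⟨⟨c, h⟩, z, hzm, hz⟩ <;>
    obtain ⟨w, hzw, hw⟩ := exists_consecutiveGaps hzm hz hmσ <;> have hwm := hw.lt
  · have hshort : (m - w) / (2 * e) = 0 := Nat.div_eq_of_lt (by omega)
    rcases h.start_le.eq_or_lt with rfl | hmc
    · refine hw.vTC_insert (h.consecutiveGaps_last hmσ) (by omega) hσ.1 le_rfl ?_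
      obtain ⟨q, hq⟩ := (Nat.modEq_iff_dvd' h.last_le).1 h.last_modEq
      rw [gapWeight_of_le h.last_le, gapWeight_end, gapWeight_end, endPeriod_two_mul, hshort,
        zero_add, show n - w = m - w + e * q by have := h.last_le; omega, hq,
        Nat.mul_div_cancel_left q he, Nat.add_mul_div_left _ _ he, Nat.div_eq_of_lt (by omega),
        zero_add]
    · have hcn := h.last_le
      have hmec := h.start_add_le hmc
      refine hw.vTC_insert (h.consecutiveGaps_period he hmσ hmc) (by omega) hσ.1 (by omega) ?_
      rw [gapWeight_of_le (by omega), gapWeight_of_le (by omega), gapWeight_of_le (by omega),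
        hshort, Nat.div_eq_of_lt (by omega), Nat.div_eq_of_lt (by omega)]
  · have hmn : m + 2 * e ≤ n := h.start_le.trans h.last_le
    refine hw.vTC_insert ⟨by omega, hmσ, h.end_notMem, h.run_mem⟩ (by omega) hσ.1 (by omega) ?_
    rw [gapWeight_of_le (by omega), gapWeight_of_le hmn, gapWeight_of_le hmn,
      Nat.add_sub_cancel_left, Nat.div_self h2e, Nat.sub_add_comm hwm.le, Nat.add_div_right _ h2e]

theorem ShortCell.not_evenPivot (h : ShortCell e n σ t c) (he : 0 < e) : ¬ EvenPivot e n σ m := by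
  rintro (hm | ⟨⟨c', hm⟩, z, hzm, hz⟩)
  · have hmt := hm.le_of_periodicTail h.toPeriodicTail
    obtain ⟨-, z, hzm, -, hz⟩ := hm
    exact hz (h.initial_mem z (hzm.trans_le hmt))
  · have hmt := hm.add_le_of_periodicTail he h.toPeriodicTail
    exact hz (h.initial_mem z (by omega))

theorem LongCell.not_evenPivot (h : LongCell e n σ m c) (he : 0 < e) : ¬ EvenPivot e n σ m' := by
  rintro (hm' | ⟨⟨c', hm'⟩, z, hzm, hz⟩)
  · exact h.not_shortPivot he hm'
  · obtain rfl := h.toLongRun.eq hm' he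
    exact hz (h.initial_mem z hzm)

theorem PeriodicTail.mem_properSubsets (h : PeriodicTail e n σ t c) (ht : t ∉ σ) :
    σ ∈ properSubsets n :=
  mem_properSubsets_of_notMem h.subset_range (h.start_le.trans h.last_le) ht

theorem LongRun.exists_cell (h : LongRun e n σ m c) (hno : ∀ m, ¬ EvenPivot e n σ m) :
    (∃ m c, LongCell e n σ m c) ∨ ∃ t c, ShortCell e n σ t c := by
  have hinit : ∀ x < m, x ∈ σ := fun x hx => by
    by_contra hxσ
    exact hno m (.inr ⟨⟨c, h⟩, x, hx, hxσ⟩)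
  by_cases hm : m ∈ σ
  · refine .inr ⟨m + 2 * e, c, h.toPeriodicTail, h.end_notMem, fun x hx => ?_⟩
    rcases lt_trichotomy x m with hxm | rfl | hxm
    exacts [hinit x hxm, hm, h.run_mem x hxm hx]
  · exact .inl ⟨m, c, h, hm, hinit⟩

theorem PeriodicTail.exists_cell_of_mem (h : PeriodicTail e n σ t c) (he : 0 < e)
    (hno : ∀ m, ¬ EvenPivot e n σ m) (hrun : ∀ x < t, t < x + e → x ∈ σ) (ht : t ∈ σ)
    (htc : t < c) : (∃ m c, LongCell e n σ m c) ∨ ∃ t c, ShortCell e n σ t c := by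
  have htail := h.add_period htc
  have hend := h.add_period_notMem he htc
  have hmem : ∀ x < t + e, t < x + e → x ∈ σ := fun x hxe hx => by
    rcases lt_trichotomy x t with hxt | rfl | hxt
    · exact hrun x hxt hx
    · exact ht
    · exact h.mem_of_lt_add hxt hxe (hxe.le.trans (htail.start_le.trans htail.last_le))
  rcases lt_or_ge t e with hte | het
  · exact .inr ⟨t + e, c, htail, hend, fun x hx => hmem x hx (by omega)⟩
  · obtain ⟨m, rfl⟩ := Nat.exists_eq_add_of_le' het
    rw [add_assoc, ← two_mul] at htail hend hmem
    exact LongRun.exists_cell ⟨htail, hend, fun x hmx hx => hmem x hx (by omega)⟩ hno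

/-- Extend the periodic tail to the left, one period at a time, until the pattern breaks. -/
theorem PeriodicTail.exists_cell (h : PeriodicTail e n σ t c) (he : 0 < e)
    (hσ : σ ∈ properSubsets n) (hno : ∀ m, ¬ EvenPivot e n σ m) :
    (∃ m c, LongCell e n σ m c) ∨ ∃ t c, ShortCell e n σ t c := by
  induction t using Nat.strong_induction_on generalizing c with | h t ih =>
  have hrun : ∀ x < t, t < x + e → x ∈ σ := fun x hx hxe => by
    by_contra hxσ
    exact hno t (.inl ⟨⟨c, h⟩, x, hx, hxe, hxσ⟩)
  by_cases hlast : t ∈ σ ∧ t < c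
  · exact h.exists_cell_of_mem he hno hrun hlast.1 hlast.2
  replace hlast : t ∈ σ → t = c := fun ht => h.start_le.eq_of_not_lt fun htc => hlast ⟨ht, htc⟩
  rcases le_or_gt e t with het | hte
  · obtain ⟨c', h'⟩ := h.exists_sub_period he het hrun hlast
    exact ih (t - e) (by omega) h'
  have hinit : ∀ x < t, x ∈ σ := fun x hx => hrun x hx (by omega)
  refine .inr ⟨t, c, h, fun ht => hσ.2 (hσ.1.antisymm fun x hx => ?_), hinit⟩
  obtain rfl := hlast ht
  rcases lt_trichotomy x t with hxt | rfl | hxt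
  exacts [hinit x hxt, ht, h.mem_of_last_lt hxt (Nat.lt_succ_iff.1 (mem_range.1 hx))]

theorem EvenPivot.toggle_mem (h : EvenPivot e n σ m) (hσ : σ ∈ properSubsets n) :
    σ.erase m ∈ properSubsets n ∧ insert m σ ∈ properSubsets n := by
  rcases h with ⟨⟨c, h⟩, z, hzm, -, hz⟩ | ⟨⟨c, h⟩, z, hzm, hz⟩
  · exact toggle_mem_properSubsets hσ (h.start_le.trans h.last_le) hzm hz
  · exact toggle_mem_properSubsets hσ
      ((Nat.le_add_right _ _).trans (h.start_le.trans h.last_le)) hzm hz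

theorem isCritical_evenPivot_iff_cell (he : 0 < e) :
    IsCritical (properSubsets n) (pivotMatching (properSubsets n) (EvenPivot e n)) σ ↔
      (∃ m c, LongCell e n σ m c) ∨ ∃ t c, ShortCell e n σ t c := by
  rw [(isPivotRule_evenPivot he n).isCritical_iff fun _ hσ _ h => h.toggle_mem hσ]
  constructor
  · rintro ⟨hσ, hno⟩
    exact (PeriodicTail.of_last hσ.1).exists_cell he hσ hno
  · rintro (⟨m, c, h⟩ | ⟨t, c, h⟩)
    · exact ⟨h.mem_properSubsets h.end_notMem, fun _ => h.not_evenPivot he⟩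
    · exact ⟨h.mem_properSubsets h.start_notMem, fun _ => h.not_evenPivot he⟩

theorem PeriodicTail.eq_of_agree_below (h : PeriodicTail e n σ t c) (h' : PeriodicTail e n σ' t c)
    (hbelow : ∀ x ≤ t, x ∈ σ ↔ x ∈ σ') : σ = σ' := by
  ext x
  rcases le_or_gt x t with hx | hx
  · exact hbelow x hx
  · rw [h.mem_iff x hx, h'.mem_iff x hx]

theorem ShortCell.eq (h : ShortCell e n σ t c) (h' : ShortCell e n σ' t c) : σ = σ' :=
  h.eq_of_agree_below h'.toPeriodicTail fun x hx => by
    rcases hx.eq_or_lt with rfl | hx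
    · exact iff_of_false h.start_notMem h'.start_notMem
    · exact iff_of_true (h.initial_mem x hx) (h'.initial_mem x hx)

theorem LongCell.mem_iff_of_le (h : LongCell e n σ m c) (hx : x ≤ m + 2 * e) :
    x ∈ σ ↔ x ≠ m ∧ x ≠ m + 2 * e := by
  have hm := h.start_notMem
  have hend := h.end_notMem
  have hinit := h.initial_mem x
  have hrun := h.run_mem x
  grind

theorem LongCell.eq (h : LongCell e n σ m c) (h' : LongCell e n σ' m c) : σ = σ' :=
  h.eq_of_agree_below h'.toPeriodicTail fun x hx => by
    rw [h.mem_iff_of_le hx, h'.mem_iff_of_le hx]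

theorem PeriodicTail.partWeight_eq (h : PeriodicTail e n σ t c) (he : 0 < e) (ht : t ∉ σ) :
    partWeight (2 * e) n σ (t + 1) (n + 1) = (n - c) / e := by
  induction hk : c - t using Nat.strong_induction_on generalizing t with | h k ih =>
  rcases h.start_le.eq_or_lt with rfl | htc
  · have hlast := h.consecutiveGaps_last ht
    rw [hlast.partWeight_eq (by omega) le_rfl, gapWeight_end, endPeriod_two_mul]
  · have htcn := (h.start_add_le htc).trans h.last_le
    rw [partWeight_split (by omega) (by omega) (h.add_period_notMem he htc),
      (h.consecutiveGaps_period he ht htc).partWeight_eq (by omega) (by omega),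
      gapWeight_of_le htcn, Nat.div_eq_of_lt (by omega), zero_add,
      ih _ (by omega) (h.add_period htc) (h.add_period_notMem he htc) rfl]

theorem ShortCell.vTC_eq (h : ShortCell e n σ t c) (he : 0 < e) :
    vTC (2 * e) n σ = t / e + (n - c) / e := by
  have htn := h.start_le.trans h.last_le
  rw [vTC_eq_partWeight h.subset_range, partWeight_split (Nat.zero_le t) (by omega) h.start_notMem,
    partWeight_initial_run h.initial_mem, endPeriod_two_mul,
    h.toPeriodicTail.partWeight_eq he h.start_notMem]

theorem LongCell.vTC_eq (h : LongCell e n σ m c) (he : 0 < e) :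
    vTC (2 * e) n σ = m / e + 1 + (n - c) / e := by
  have hmn : m + 2 * e ≤ n := h.start_le.trans h.last_le
  have hrun : ConsecutiveGaps σ m (m + 2 * e) :=
    ⟨by omega, h.start_notMem, h.end_notMem, h.run_mem⟩
  rw [hrun.vTC_eq (by omega) h.subset_range (by omega), partWeight_initial_run h.initial_mem,
    endPeriod_two_mul, gapWeight_of_le hmn, Nat.add_sub_cancel_left, Nat.div_self (by omega),
    h.toPeriodicTail.partWeight_eq he h.end_notMem]

end Even

section Strings

variable {a e i j m q t x : ℕ} {l l₁ l₂ : List Bool}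

theorem mem_strSet : x ∈ strSet l ↔ l.getD x false = true := by
  rw [strSet, Finset.mem_filter, Finset.mem_range, and_iff_right_iff_imp]
  intro h
  by_contra hx
  rw [List.getD_eq_default _ _ (not_lt.1 hx)] at h
  exact Bool.false_ne_true h

theorem mem_strSet_append :
    x ∈ strSet (l₁ ++ l₂) ↔ x ∈ strSet l₁ ∨ l₁.length ≤ x ∧ x - l₁.length ∈ strSet l₂ := by
  simp only [mem_strSet]
  rcases lt_or_ge x l₁.length with h | h
  · rw [List.getD_append _ _ _ _ h, or_iff_left fun h' => h'.1.not_gt h]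
  · rw [List.getD_append_right _ _ _ _ h, List.getD_eq_default l₁ _ h]
    simp [h]

theorem lt_length_of_mem_strSet (h : x ∈ strSet l) : x < l.length :=
  Finset.mem_range.1 (Finset.mem_of_mem_filter x h)

theorem mem_strSet_one : x ∈ strSet (one a) ↔ x < a := by
  simp +contextual [strSet, one]

theorem notMem_strSet_zero : x ∉ strSet (zero a) := by
  simp [mem_strSet, zero]

theorem length_one (a : ℕ) : (one a).length = a := List.length_replicate

theorem length_zero (a : ℕ) : (zero a).length = a := List.length_replicate

theorem length_rep (j : ℕ) (l : List Bool) : (rep j l).length = j * l.length := by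
  induction j with
  | zero => simp [rep]
  | succ j ih => rw [rep, List.length_append, ih]; ring

theorem count_rep (j : ℕ) (l : List Bool) : (rep j l).count true = j * l.count true := by
  induction j with
  | zero => simp [rep]
  | succ j ih => rw [rep, List.count_append, ih]; ring

theorem card_strSet (l : List Bool) : (strSet l).card = l.count true := by
  induction l with
  | nil => simp [strSet]
  | cons a l ih =>
    rw [strSet, Finset.card_filter] at ih ⊢
    rw [List.length_cons, Finset.sum_range_succ', List.count_cons, ← ih]
    cases a <;> simp

theorem mem_strSet_rep :
    x ∈ strSet (rep j l) ↔ x < j * l.length ∧ x % l.length ∈ strSet l := by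
  induction j generalizing x with
  | zero => simp [rep, strSet]
  | succ j ih =>
    rw [rep, Nat.succ_mul, mem_strSet_append, ih]
    rcases lt_or_ge x l.length with hx | hx
    · rw [Nat.mod_eq_of_lt hx]
      grind
    · rw [← Nat.mod_eq_sub_mod hx]
      have := @lt_length_of_mem_strSet x l
      grind

theorem mem_strSet_rep_one_zero (f : ℕ) :
    x ∈ strSet (rep j (one f ++ zero 1)) ↔ x < j * (f + 1) ∧ ¬ f + 1 ∣ x + 1 := by
  have hlt : x % (f + 1) < f + 1 := Nat.mod_lt x f.succ_pos
  rw [mem_strSet_rep, mem_strSet_append, mem_strSet_one, Nat.dvd_iff_mod_eq_zero,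
    Nat.succ_mod_succ_eq_zero_iff, List.length_append, length_one, length_zero]
  simp only [notMem_strSet_zero, and_false, or_false]
  exact and_congr_right fun _ => by omega

theorem mem_strSet_append_period (he : 0 < e) (hx : l.length < x) :
    x ∈ strSet (l ++ zero 1 ++ rep j (one (e - 1) ++ zero 1) ++ one a) ↔
      x ≤ l.length + j * e + a ∧ (l.length + j * e < x ∨ ¬ x ≡ l.length [MOD e]) := by
  obtain ⟨i, rfl⟩ := Nat.exists_eq_add_of_lt hx
  have hmod : l.length + i + 1 ≡ l.length [MOD e] ↔ e ∣ i + 1 := by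
    rw [add_assoc, Nat.add_modEq_left_iff]
  have hl : l.length + i + 1 ∉ strSet l := fun h => by have := lt_length_of_mem_strSet h; omega
  have hper : e - 1 + 1 = e := Nat.sub_add_cancel he
  have hi : l.length + i + 1 - (l.length + 1) = i := by omega
  simp only [mem_strSet_append, mem_strSet_rep_one_zero, mem_strSet_one, List.length_append,
    length_rep, length_one, length_zero, notMem_strSet_zero, hl, hmod, hper, hi, and_false,
    false_or]
  grind

theorem periodicTail_strSet (he : 0 < e) (hl : l.length = t) :
    PeriodicTail e (t + j * e + q * e)
      (strSet (l ++ zero 1 ++ rep j (one (e - 1) ++ zero 1) ++ one (q * e))) t (t + j * e) := by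
  have hmod : t + j * e + q * e ≡ t [MOD e] := by simp
  refine ⟨by omega, by omega, hmod.symm, by simp, fun x hx => ?_⟩
  subst hl
  rw [mem_strSet_append_period he hx]
  exact and_congr_right' (or_congr_right (not_congr ⟨(·.trans hmod.symm), (·.trans hmod)⟩))

theorem shortCell_strSet (he : 0 < e) (t j q : ℕ) :
    ShortCell e (t + j * e + q * e)
      (strSet (one t ++ zero 1 ++ rep j (one (e - 1) ++ zero 1) ++ one (q * e))) t (t + j * e) where
  toPeriodicTail := periodicTail_strSet he (length_one t)
  start_notMem := by
    simp [mem_strSet_append, mem_strSet_one, notMem_strSet_zero, length_one, length_zero]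
  initial_mem x hx := by simp [mem_strSet_append, mem_strSet_one, hx]

theorem longCell_strSet (he : 0 < e) (m j q : ℕ) :
    LongCell e (m + 2 * e + j * e + q * e)
      (strSet (one m ++ zero 1 ++ one (2 * e - 1) ++ zero 1 ++
        rep j (one (e - 1) ++ zero 1) ++ one (q * e))) m (m + 2 * e + j * e) where
  toPeriodicTail := periodicTail_strSet he <| by
    simp only [List.length_append, length_one, length_zero]
    omega
  end_notMem := by
    simp [mem_strSet_append, mem_strSet_one, notMem_strSet_zero, length_one, length_zero]
  run_mem x hmx hx := by
    simp only [mem_strSet_append, mem_strSet_one, List.length_append, length_one, length_zero]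
    grind
  start_notMem := by
    simp [mem_strSet_append, mem_strSet_one, notMem_strSet_zero, length_one, length_zero]
  initial_mem x hx := by simp [mem_strSet_append, mem_strSet_one, hx]

theorem card_strSet_short (he : 0 < e) (t j q : ℕ) :
    (strSet (one t ++ zero 1 ++ rep j (one (e - 1) ++ zero 1) ++ one (q * e))).card + j =
      t + j * e + q * e := by
  obtain ⟨f, rfl⟩ := Nat.exists_eq_succ_of_ne_zero he.ne'
  simp [card_strSet, count_rep, one, zero]
  ring

theorem card_strSet_long (he : 0 < e) (m j q : ℕ) :
    (strSet (one m ++ zero 1 ++ one (2 * e - 1) ++ zero 1 ++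
      rep j (one (e - 1) ++ zero 1) ++ one (q * e))).card + j + 1 =
      m + 2 * e + j * e + q * e := by
  obtain ⟨f, rfl⟩ := Nat.exists_eq_succ_of_ne_zero he.ne'
  have : 2 * f.succ - 1 = 2 * f + 1 := by omega
  simp [card_strSet, count_rep, one, zero, this]
  ring

end Strings

section CriticalCells

variable {c e k m n q₁ q₂ r t : ℕ} {σ : Finset ℕ}

theorem sigC'_two_mul (e j q₁ q₂ r : ℕ) :
    sigC' (2 * e) (q₁ + q₂ + j) r q₁ q₂ = strSet (one (q₁ * e + r) ++ zero 1 ++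
      rep j (one (e - 1) ++ zero 1) ++ one (q₂ * e)) := by
  rw [sigC', Nat.mul_div_cancel_left e two_pos, Nat.sub_sub, Nat.add_sub_cancel_left]

theorem sigC_two_mul (e j q₁ q₂ r : ℕ) :
    sigC (2 * e) (q₁ + q₂ + 2 + j) r q₁ q₂ = strSet (one (q₁ * e + r) ++ zero 1 ++
      one (2 * e - 1) ++ zero 1 ++ rep j (one (e - 1) ++ zero 1) ++ one (q₂ * e)) := by
  have hj : q₁ + q₂ + 2 + j - q₁ - q₂ - 2 = j := by omega
  rw [sigC, Nat.mul_div_cancel_left e two_pos, hj]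

theorem shortCell_sigC' (he : 0 < e) (hn : n = k * e + r) (hq : q₁ + q₂ ≤ k) :
    ShortCell e n (sigC' (2 * e) k r q₁ q₂) (q₁ * e + r) (n - q₂ * e) := by
  obtain ⟨j, rfl⟩ := Nat.exists_eq_add_of_le hq
  have hn' : n = q₁ * e + r + j * e + q₂ * e := by rw [hn]; ring
  rw [sigC'_two_mul, hn', Nat.add_sub_cancel]
  exact shortCell_strSet he _ j q₂

theorem longCell_sigC (he : 0 < e) (hn : n = k * e + r) (hq : q₁ + q₂ + 2 ≤ k) :
    LongCell e n (sigC (2 * e) k r q₁ q₂) (q₁ * e + r) (n - q₂ * e) := by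
  obtain ⟨j, rfl⟩ := Nat.exists_eq_add_of_le hq
  have hn' : n = q₁ * e + r + 2 * e + j * e + q₂ * e := by rw [hn]; ring
  rw [sigC_two_mul, hn', Nat.add_sub_cancel]
  exact longCell_strSet he _ j q₂

theorem PeriodicTail.exists_quotients (h : PeriodicTail e n σ t c) (hr : r < e)
    (hn : n = k * e + r) : ∃ q₁ q₂, q₁ + q₂ ≤ k ∧ t = q₁ * e + r ∧ c = n - q₂ * e := by
  have htc := h.start_le
  have hcn := h.last_le
  have ht : t = t / e * e + r := by
    have hmod : t % e = r := by rw [h.start_modEq, hn, Nat.mul_add_mod', Nat.mod_eq_of_lt hr]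
    rw [← hmod, Nat.div_add_mod']
  obtain ⟨q₂, hq₂⟩ := (Nat.modEq_iff_dvd' h.last_le).1 h.last_modEq
  rw [mul_comm] at hq₂
  refine ⟨t / e, q₂, ?_, ht, by omega⟩
  have : (t / e + q₂) * e ≤ k * e := by rw [add_mul]; omega
  exact Nat.le_of_mul_le_mul_right this (by omega)

theorem ShortCell.exists_eq_sigC' (h : ShortCell e n σ t c) (hr : r < e) (hn : n = k * e + r) :
    ∃ q₁ q₂, q₁ + q₂ ≤ k ∧ σ = sigC' (2 * e) k r q₁ q₂ := by
  obtain ⟨q₁, q₂, hq, rfl, rfl⟩ := h.exists_quotients hr hn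
  exact ⟨q₁, q₂, hq, h.eq (shortCell_sigC' (by omega) hn hq)⟩

theorem LongCell.exists_eq_sigC (h : LongCell e n σ m c) (hr : r < e) (hn : n = k * e + r) :
    ∃ q₁ q₂, q₁ + q₂ + 2 ≤ k ∧ σ = sigC (2 * e) k r q₁ q₂ := by
  obtain ⟨q, q₂, hq, hm, rfl⟩ := h.exists_quotients hr hn
  have h2q : 2 ≤ q := by
    by_contra! hlt
    have : q * e ≤ 1 * e := Nat.mul_le_mul_right e (by omega)
    omega
  obtain ⟨q₁, rfl⟩ := Nat.exists_eq_add_of_le' h2q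
  obtain rfl : m = q₁ * e + r := by rw [add_mul] at hm; omega
  exact ⟨q₁, q₂, by omega, h.eq (longCell_sigC (by omega) hn (by omega))⟩

theorem isCritical_evenPivot_iff (hr : r < e) (hn : n = k * e + r) :
    IsCritical (properSubsets n) (pivotMatching (properSubsets n) (EvenPivot e n)) σ ↔
      (∃ q₁ q₂, q₁ + q₂ + 2 ≤ k ∧ σ = sigC (2 * e) k r q₁ q₂) ∨
        ∃ q₁ q₂, q₁ + q₂ ≤ k ∧ σ = sigC' (2 * e) k r q₁ q₂ := by
  have he : 0 < e := Nat.zero_lt_of_lt hr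
  rw [isCritical_evenPivot_iff_cell he]
  refine or_congr ⟨?_, ?_⟩ ⟨?_, ?_⟩
  · rintro ⟨m, c, h⟩
    exact h.exists_eq_sigC hr hn
  · rintro ⟨q₁, q₂, hq, rfl⟩
    exact ⟨_, _, longCell_sigC he hn hq⟩
  · rintro ⟨t, c, h⟩
    exact h.exists_eq_sigC' hr hn
  · rintro ⟨q₁, q₂, hq, rfl⟩
    exact ⟨_, _, shortCell_sigC' he hn hq⟩

theorem card_sigC' (he : 0 < e) (hn : n = k * e + r) (hq : q₁ + q₂ ≤ k) :
    (sigC' (2 * e) k r q₁ q₂).card + k = n + q₁ + q₂ := by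
  obtain ⟨j, rfl⟩ := Nat.exists_eq_add_of_le hq
  have hcard := card_strSet_short he (q₁ * e + r) j q₂
  rw [sigC'_two_mul, hn]
  linear_combination hcard

theorem card_sigC (he : 0 < e) (hn : n = k * e + r) (hq : q₁ + q₂ + 2 ≤ k) :
    (sigC (2 * e) k r q₁ q₂).card + k = n + q₁ + q₂ + 1 := by
  obtain ⟨j, rfl⟩ := Nat.exists_eq_add_of_le hq
  have hcard := card_strSet_long he (q₁ * e + r) j q₂
  rw [sigC_two_mul, hn]
  linear_combination hcard

theorem mul_add_div_of_lt (hr : r < e) (q : ℕ) : (q * e + r) / e = q := by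
  rw [mul_comm, Nat.mul_add_div (by omega), Nat.div_eq_of_lt hr, add_zero]

theorem sub_sub_mul_div (he : 0 < e) {q : ℕ} (hq : q * e ≤ n) : (n - (n - q * e)) / e = q := by
  rw [Nat.sub_sub_self hq, Nat.mul_div_cancel q he]

theorem vTC_sigC' (hr : r < e) (hn : n = k * e + r) (hq : q₁ + q₂ ≤ k) :
    vTC (2 * e) n (sigC' (2 * e) k r q₁ q₂) = q₁ + q₂ := by
  have he : 0 < e := Nat.zero_lt_of_lt hr
  have hq₂ : q₂ * e ≤ k * e := Nat.mul_le_mul_right e (by omega)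
  rw [(shortCell_sigC' he hn hq).vTC_eq he, mul_add_div_of_lt hr, sub_sub_mul_div he (by omega)]

theorem vTC_sigC (hr : r < e) (hn : n = k * e + r) (hq : q₁ + q₂ + 2 ≤ k) :
    vTC (2 * e) n (sigC (2 * e) k r q₁ q₂) = q₁ + q₂ + 1 := by
  have he : 0 < e := Nat.zero_lt_of_lt hr
  have hq₂ : q₂ * e ≤ k * e := Nat.mul_le_mul_right e (by omega)
  rw [(longCell_sigC he hn hq).vTC_eq he, mul_add_div_of_lt hr, sub_sub_mul_div he (by omega)]
  ring

end CriticalCells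

/--
The precise matching of affine type `C̃_n` (Theorem `thm:matching-tCn`):
an acyclic matching on the family of proper subsets of the path `{0, …, n}`,
weighted with respect to the `C̃`-weight, whose critical cells for `d` odd
consist of the single simplex `{0, …, n-1}` and for `d` even (writing
`n = k·(d/2) + r`, `0 ≤ r < d/2`) are exactly the `σ_{q₁,q₂}` (`q₁+q₂ ≤ k-2`)
and `σ'_{q₁,q₂}` (`q₁+q₂ ≤ k`), with the stated cardinalities and weights; in
particular for `d` even the matching is precise:
`|σ| - v(σ) = n - k` for every critical `σ`.
-/
theorem exists_precise_matching_affineC (d n : ℕ) (hd : 2 ≤ d) (hn : 2 ≤ n) :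
    ∃ M : Set (Finset ℕ × Finset ℕ),
      IsMatching {σ | σ ⊆ Finset.range (n + 1) ∧ σ ≠ Finset.range (n + 1)} M ∧
      IsAcyclic M ∧
      IsWeighted (vTC d n) M ∧
      (d % 2 = 1 → ∀ σ : Finset ℕ,
        (IsCritical {σ | σ ⊆ Finset.range (n + 1) ∧ σ ≠ Finset.range (n + 1)} M σ ↔
          σ = Finset.range n)) ∧
      (d % 2 = 0 → ∀ k r : ℕ, r < d / 2 → n = k * (d / 2) + r →
        (∀ σ : Finset ℕ,
          (IsCritical {σ | σ ⊆ Finset.range (n + 1) ∧ σ ≠ Finset.range (n + 1)} M σ ↔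
            ((∃ q₁ q₂ : ℕ, q₁ + q₂ + 2 ≤ k ∧ σ = sigC d k r q₁ q₂) ∨
             (∃ q₁ q₂ : ℕ, q₁ + q₂ ≤ k ∧ σ = sigC' d k r q₁ q₂)))) ∧
        (∀ q₁ q₂ : ℕ, q₁ + q₂ + 2 ≤ k →
          (sigC d k r q₁ q₂).card + k = n + q₁ + q₂ + 1 ∧
          vTC d n (sigC d k r q₁ q₂) = q₁ + q₂ + 1) ∧
        (∀ q₁ q₂ : ℕ, q₁ + q₂ ≤ k →
          (sigC' d k r q₁ q₂).card + k = n + q₁ + q₂ ∧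
          vTC d n (sigC' d k r q₁ q₂) = q₁ + q₂) ∧
        (∀ σ : Finset ℕ,
          IsCritical {σ | σ ⊆ Finset.range (n + 1) ∧ σ ≠ Finset.range (n + 1)} M σ →
          (σ.card : ℤ) - (vTC d n σ : ℤ) = (n : ℤ) - (k : ℤ))) := by
  rcases Nat.mod_two_eq_zero_or_one d with heven | hodd
  · obtain ⟨e, rfl⟩ := Nat.dvd_of_mod_eq_zero heven
    have he : 0 < e := by omega
    have hrule := isPivotRule_evenPivot he n
    refine ⟨pivotMatching (properSubsets n) (EvenPivot e n), hrule.isMatching, hrule.isAcyclic,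
      isWeighted_evenPivot he, fun h => by omega, fun _ k r hr hkr => ?_⟩
    rw [Nat.mul_div_cancel_left e two_pos] at hr hkr
    have hC := fun q₁ q₂ (hq : q₁ + q₂ + 2 ≤ k) =>
      And.intro (card_sigC he hkr hq) (vTC_sigC hr hkr hq)
    have hC' := fun q₁ q₂ (hq : q₁ + q₂ ≤ k) =>
      And.intro (card_sigC' he hkr hq) (vTC_sigC' hr hkr hq)
    refine ⟨fun σ => isCritical_evenPivot_iff hr hkr, hC, hC', fun σ hσ => ?_⟩
    rcases (isCritical_evenPivot_iff hr hkr).1 hσ with ⟨q₁, q₂, hq, rfl⟩ | ⟨q₁, q₂, hq, rfl⟩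
    · have := hC q₁ q₂ hq
      omega
    · have := hC' q₁ q₂ hq
      omega
  · have hrule := isPivotRule_lastPivot n
    exact ⟨pivotMatching (properSubsets n) (LastPivot n), hrule.isMatching, hrule.isAcyclic,
      isWeighted_lastPivot hd hodd, fun _ σ => isCritical_lastPivot_iff, fun h => by omega⟩
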